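/- Let A ∈ ℝ^{m×n} have unit ℓ₂-norm columns and satisfy the RIP of order K+1 with constant δ ≤ 1/2. Let x ∈ ℝ^n be K-sparse with support S = supp(x), let S' be a proper subset of S, and set r = P_{S'}^⊥ A x. Then for every j ∈ {1,…,n} \ S, |⟨r, a_j⟩| ≤ ‖r‖₂² / (2 ‖x_{S\S'}‖₂). -/

import Mathlib

open Finset

noncomputable section

/-- The support of a vector as a `Finset`. -/
def vsupp {n : ℕ} (x : Fin n → ℝ) : Finset (Fin n) :=
  Finset.univ.filter (fun i => x i ≠ 0)

/-- `A` satisfies the restricted isometry property of order `r` with constant `δ`. -/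
def RIP {m n : ℕ} (A : Matrix (Fin m) (Fin n) ℝ) (r : ℕ) (δ : ℝ) : Prop :=
  ∀ x : Fin n → ℝ, (vsupp x).card ≤ r →
    (1 - δ) * (∑ i, x i ^ 2) ≤ (∑ i, (A.mulVec x) i ^ 2) ∧
      (∑ i, (A.mulVec x) i ^ 2) ≤ (1 + δ) * (∑ i, x i ^ 2)

/-- The `j`-th column of `A`. -/
def col {m n : ℕ} (A : Matrix (Fin m) (Fin n) ℝ) (j : Fin n) : Fin m → ℝ :=
  fun i => A i j

/-- Euclidean dot product. -/
def dot {m : ℕ} (u v : Fin m → ℝ) : ℝ := ∑ i, u i * v i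

/-- Squared Euclidean norm. -/
def nsq {m : ℕ} (v : Fin m → ℝ) : ℝ := ∑ i, v i ^ 2

/-- Euclidean norm. -/
def enorm {m : ℕ} (v : Fin m → ℝ) : ℝ := Real.sqrt (nsq v)

/-- Squared norm of the restriction of `x` to `T`. -/
def rsq {n : ℕ} (x : Fin n → ℝ) (T : Finset (Fin n)) : ℝ := ∑ i ∈ T, x i ^ 2

/-- Norm of the restriction of `x` to `T`. -/
def rnorm {n : ℕ} (x : Fin n → ℝ) (T : Finset (Fin n)) : ℝ := Real.sqrt (rsq x T)

/-- Span of the columns of `A` indexed by `J`. -/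
def colSpan {m n : ℕ} (A : Matrix (Fin m) (Fin n) ℝ) (J : Finset (Fin n)) :
    Submodule ℝ (EuclideanSpace ℝ (Fin m)) :=
  Submodule.span ℝ ((fun j => (WithLp.equiv 2 (Fin m → ℝ)).symm (col A j)) '' (J : Set (Fin n)))

/-- The projection `P_J^⊥ v` of `v` onto the orthogonal complement of the span of the
columns of `A` indexed by `J`. -/
def projPerp {m n : ℕ} (A : Matrix (Fin m) (Fin n) ℝ) (J : Finset (Fin n)) (v : Fin m → ℝ) :
    Fin m → ℝ :=
  v - WithLp.equiv 2 (Fin m → ℝ)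
    ((Submodule.orthogonalProjectionOnto (colSpan A J) ((WithLp.equiv 2 (Fin m → ℝ)).symm v) :
      EuclideanSpace ℝ (Fin m)))

/-- The OLS selection criterion value for index `j`, given measurements `y` and current
estimated support `Sk`. -/
def olsQuot {m n : ℕ} (A : Matrix (Fin m) (Fin n) ℝ) (y : Fin m → ℝ) (Sk : Finset (Fin n))
    (j : Fin n) : ℝ :=
  |dot (projPerp A Sk y) (col A j)| / _root_.enorm (projPerp A Sk (col A j))

/-- The estimated support of OLS after `k` iterations (ties broken towards smaller index). -/
def olsSupp {m n : ℕ} (A : Matrix (Fin m) (Fin n) ℝ) (y : Fin m → ℝ) : ℕ → Finset (Fin n)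
  | 0 => ∅
  | k + 1 =>
    let Sk := olsSupp A y k
    let cand := (Finset.univ \ Sk).filter
      (fun j => ∀ i ∈ Finset.univ \ Sk, olsQuot A y Sk i ≤ olsQuot A y Sk j)
    if h : cand.Nonempty then insert (cand.min' h) Sk else Sk

/-- The constant `C_K` from the paper. -/
def CK (K : ℕ) : ℝ :=
  if K = 1 then 1 else if K = 2 then 2/3 else if K = 3 then 4/7 else 1 / Real.sqrt K

/-!
The residual is `r = A z` for a vector `z` that agrees with `x` off `S'` and vanishes off `S`, so
`‖x_{S \ S'}‖ ≤ ‖z‖`. Applying the lower RIP bound to the vectors `z + t e_j`, `t ∈ ℝ`, says that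
the quadratic polynomial `‖r + t a_j‖² - (1 - δ) (‖z‖² + t²)` in `t` is nonnegative. Hence its
discriminant is nonpositive, that is,
`⟨r, a_j⟩² ≤ (‖a_j‖² - (1 - δ)) (‖r‖² - (1 - δ) ‖z‖²)`, and the inequality
`4 u (‖r‖² - u) ≤ ‖r‖⁴` with `u = (1 - δ) ‖z‖²` removes the subtraction.
-/

section Vectors

variable {n : ℕ} {x : Fin n → ℝ} {T : Finset (Fin n)}

theorem mem_vsupp {i : Fin n} : i ∈ vsupp x ↔ x i ≠ 0 := by
  simp [vsupp]

theorem vsupp_subset_iff : vsupp x ⊆ T ↔ ∀ i ∉ T, x i = 0 := by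
  simp only [subset_iff, mem_vsupp, not_imp_comm]

theorem nsq_nonneg (x : Fin n → ℝ) : 0 ≤ nsq x :=
  sum_nonneg fun i _ => sq_nonneg (x i)

theorem rsq_le_nsq (x : Fin n → ℝ) (T : Finset (Fin n)) : rsq x T ≤ nsq x :=
  sum_le_univ_sum_of_nonneg fun i => sq_nonneg (x i)

theorem rnorm_sq (x : Fin n → ℝ) (T : Finset (Fin n)) : rnorm x T ^ 2 = rsq x T :=
  Real.sq_sqrt (sum_nonneg fun i _ => sq_nonneg (x i))

theorem rnorm_vsupp_sdiff_pos (h : ¬ vsupp x ⊆ T) : 0 < rnorm x (vsupp x \ T) := by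
  obtain ⟨i, hix, hiT⟩ := not_subset.mp h
  exact Real.sqrt_pos.mpr <| sum_pos' (fun k _ => sq_nonneg (x k))
    ⟨i, mem_sdiff.mpr ⟨hix, hiT⟩, sq_pos_of_ne_zero (mem_vsupp.mp hix)⟩

theorem nsq_add_smul (x y : Fin n → ℝ) (t : ℝ) :
    nsq (x + t • y) = nsq x + 2 * t * dot x y + t ^ 2 * nsq y := by
  simp only [nsq, dot, mul_sum, ← sum_add_distrib, Pi.add_apply, Pi.smul_apply, smul_eq_mul]
  exact sum_congr rfl fun i _ => by ring

theorem nsq_add_smul_single (x : Fin n → ℝ) (j : Fin n) (t : ℝ) :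
    nsq (x + t • Pi.single j 1) = nsq x + 2 * t * x j + t ^ 2 := by
  have dot_single : dot x (Pi.single j 1) = x j := by simp [dot, Pi.single_apply]
  have nsq_single : nsq (Pi.single j 1 : Fin n → ℝ) = 1 := by simp [nsq, Pi.single_apply]
  rw [nsq_add_smul, dot_single, nsq_single, mul_one]

theorem card_vsupp_add_smul_single_le (x : Fin n → ℝ) (j : Fin n) (t : ℝ) :
    (vsupp (x + t • Pi.single j 1)).card ≤ (vsupp x).card + 1 := by
  have hsub : vsupp (x + t • Pi.single j 1) ⊆ insert j (vsupp x) :=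
    vsupp_subset_iff.mpr fun i hi => by simp_all [mem_vsupp]
  exact (card_le_card hsub).trans (card_insert_le _ _)

end Vectors

section RestrictedIsometry

variable {m n K : ℕ} {A : Matrix (Fin m) (Fin n) ℝ} {δ : ℝ}

theorem mulVec_add_smul_single (A : Matrix (Fin m) (Fin n) ℝ) (z : Fin n → ℝ) (j : Fin n)
    (t : ℝ) : A.mulVec (z + t • Pi.single j 1) = A.mulVec z + t • col A j := by
  rw [Matrix.mulVec_add, Matrix.mulVec_smul, Matrix.mulVec_single_one]
  rfl

theorem RIP.one_sub_le_nsq_col (hA : RIP A (K + 1) δ) (j : Fin n) : 1 - δ ≤ nsq (col A j) := by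
  have hsupp : vsupp (Pi.single j 1 : Fin n → ℝ) ⊆ {j} :=
    vsupp_subset_iff.mpr fun i hi => Pi.single_eq_of_ne (notMem_singleton.mp hi) 1
  have hcard : (vsupp (Pi.single j 1 : Fin n → ℝ)).card ≤ K + 1 :=
    (card_le_card hsupp).trans (Nat.le_add_left 1 K)
  simpa [Pi.single_apply, nsq, col] using (hA _ hcard).1

-- The form `(u, v) ↦ ⟨A u, A v⟩ - (1 - δ) ⟨u, v⟩` is positive semidefinite on the span of `z`
-- and `e_j`; this is its Cauchy–Schwarz inequality.
theorem RIP.sq_dot_mulVec_col_le (hA : RIP A (K + 1) δ) {z : Fin n → ℝ}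
    (hz : (vsupp z).card ≤ K) {j : Fin n} (hj : z j = 0) :
    dot (A.mulVec z) (col A j) ^ 2 ≤
      (nsq (col A j) - (1 - δ)) * (nsq (A.mulVec z) - (1 - δ) * nsq z) := by
  have quadratic_nonneg (t : ℝ) :
      0 ≤ (nsq (col A j) - (1 - δ)) * (t * t) + 2 * dot (A.mulVec z) (col A j) * t +
        (nsq (A.mulVec z) - (1 - δ) * nsq z) := by
    have hcard : (vsupp (z + t • Pi.single j 1)).card ≤ K + 1 :=
      (card_vsupp_add_smul_single_le z j t).trans (Nat.succ_le_succ hz)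
    have lower : (1 - δ) * nsq (z + t • Pi.single j 1) ≤
        nsq (A.mulVec (z + t • Pi.single j 1)) := (hA _ hcard).1
    rw [mulVec_add_smul_single, nsq_add_smul_single, nsq_add_smul, hj] at lower
    linarith
  have discrim_nonpos := discrim_le_zero quadratic_nonneg
  rw [discrim] at discrim_nonpos
  linarith

theorem RIP.sq_two_mul_mul_dot_mulVec_col_le (hA : RIP A (K + 1) δ) (hδ : δ < 1)
    {z : Fin n → ℝ} (hz : (vsupp z).card ≤ K) {j : Fin n} (hj : z j = 0) {ρ : ℝ}
    (hρ : ρ ^ 2 ≤ nsq z) :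
    (2 * ρ * dot (A.mulVec z) (col A j)) ^ 2 ≤
      (nsq (col A j) / (1 - δ) - 1) * nsq (A.mulVec z) ^ 2 := by
  set c := dot (A.mulVec z) (col A j)
  set q := nsq (col A j)
  set R := nsq (A.mulVec z)
  have hδ' : 0 < 1 - δ := sub_pos.mpr hδ
  have hq : 0 ≤ q - (1 - δ) := sub_nonneg.mpr (hA.one_sub_le_nsq_col j)
  have amgm : 4 * ((1 - δ) * nsq z) * (R - (1 - δ) * nsq z) ≤ R ^ 2 := by
    linarith [sq_nonneg (R - 2 * ((1 - δ) * nsq z))]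
  have scaled : (1 - δ) * (2 * ρ * c) ^ 2 ≤ (q - (1 - δ)) * R ^ 2 :=
    calc (1 - δ) * (2 * ρ * c) ^ 2 = 4 * ((1 - δ) * ρ ^ 2) * c ^ 2 := by ring
      _ ≤ 4 * ((1 - δ) * nsq z) * c ^ 2 := by gcongr
      _ ≤ 4 * ((1 - δ) * nsq z) * ((q - (1 - δ)) * (R - (1 - δ) * nsq z)) := by
          have := nsq_nonneg z
          gcongr
          exact hA.sq_dot_mulVec_col_le hz hj
      _ = (q - (1 - δ)) * (4 * ((1 - δ) * nsq z) * (R - (1 - δ) * nsq z)) := by ring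
      _ ≤ (q - (1 - δ)) * R ^ 2 := by gcongr
  calc (2 * ρ * c) ^ 2 ≤ (q - (1 - δ)) * R ^ 2 / (1 - δ) := (le_div_iff₀' hδ').mpr scaled
    _ = (q / (1 - δ) - 1) * R ^ 2 := by field_simp

theorem RIP.abs_dot_mulVec_col_le (hA : RIP A (K + 1) δ) (hδ : δ < 1) {z : Fin n → ℝ}
    (hz : (vsupp z).card ≤ K) {j : Fin n} (hj : z j = 0) {ρ : ℝ} (hρ₀ : 0 < ρ)
    (hρ : ρ ^ 2 ≤ nsq z) :
    |dot (A.mulVec z) (col A j)| ≤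
      √(nsq (col A j) / (1 - δ) - 1) * (nsq (A.mulVec z) / (2 * ρ)) := by
  have h := Real.abs_le_sqrt (hA.sq_two_mul_mul_dot_mulVec_col_le hδ hz hj hρ)
  rw [Real.sqrt_mul' _ (sq_nonneg _), Real.sqrt_sq (nsq_nonneg _), abs_mul,
    abs_of_pos (by positivity : 0 < 2 * ρ)] at h
  rw [← mul_div_assoc]
  exact (le_div_iff₀' (by positivity)).mpr h

end RestrictedIsometry

section Residual

variable {m n : ℕ} {A : Matrix (Fin m) (Fin n) ℝ} {J : Finset (Fin n)}

theorem exists_mulVec_eq_of_mem_colSpan {v : EuclideanSpace ℝ (Fin m)} (hv : v ∈ colSpan A J) :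
    ∃ w : Fin n → ℝ, vsupp w ⊆ J ∧ A.mulVec w = v.ofLp := by
  obtain ⟨c, rfl⟩ := (Submodule.mem_span_image_finset_iff_exists_fun' ℝ).mp hv
  refine ⟨fun i => if i ∈ J then c i else 0, vsupp_subset_iff.mpr fun i hi => if_neg hi, ?_⟩
  ext k
  simp [Matrix.mulVec, dotProduct, col, mul_comm]

theorem exists_projPerp_mulVec_eq (A : Matrix (Fin m) (Fin n) ℝ) (J : Finset (Fin n))
    (x : Fin n → ℝ) :
    ∃ z : Fin n → ℝ, projPerp A J (A.mulVec x) = A.mulVec z ∧ ∀ i ∉ J, z i = x i := by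
  obtain ⟨w, hwJ, hw⟩ := exists_mulVec_eq_of_mem_colSpan
    (Submodule.orthogonalProjectionOnto (colSpan A J)
      ((WithLp.equiv 2 (Fin m → ℝ)).symm (A.mulVec x))).2
  refine ⟨x - w, ?_, fun i hi => ?_⟩
  · rw [Matrix.mulVec_sub, hw]
    rfl
  · rw [Pi.sub_apply, vsupp_subset_iff.mp hwJ i hi, sub_zero]

end Residual

theorem stmt6_general {m n K : ℕ} {A : Matrix (Fin m) (Fin n) ℝ} {δ : ℝ} (hδ : δ < 1)
    (hA : RIP A (K + 1) δ) {x : Fin n → ℝ} {J : Finset (Fin n)}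
    (hK : (vsupp x ∪ J).card ≤ K) (hJ : ¬ vsupp x ⊆ J) {j : Fin n} (hj : j ∉ vsupp x ∪ J) :
    |dot (projPerp A J (A.mulVec x)) (col A j)| ≤ √(nsq (col A j) / (1 - δ) - 1) *
      (nsq (projPerp A J (A.mulVec x)) / (2 * rnorm x (vsupp x \ J))) := by
  obtain ⟨z, hr, hzx⟩ := exists_projPerp_mulVec_eq A J x
  have hz : ∀ i ∉ vsupp x ∪ J, z i = 0 := fun i hi => by
    simp_all [mem_vsupp]
  have hnorm : rnorm x (vsupp x \ J) ^ 2 ≤ nsq z :=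
    calc rnorm x (vsupp x \ J) ^ 2 = rsq x (vsupp x \ J) := rnorm_sq x _
      _ = rsq z (vsupp x \ J) := sum_congr rfl fun i hi => by rw [hzx i (mem_sdiff.mp hi).2]
      _ ≤ nsq z := rsq_le_nsq z _
  rw [hr]
  exact hA.abs_dot_mulVec_col_le hδ ((card_le_card (vsupp_subset_iff.mpr hz)).trans hK)
    (hz j hj) (rnorm_vsupp_sdiff_pos hJ) hnorm

/-- under unit-norm columns and RIP of order `K+1` with `δ ≤ 1/2`,
for every `j ∉ S`, `|⟨r, a_j⟩| ≤ ‖r‖₂² / (2‖x_{S\S'}‖₂)`. -/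
theorem stmt6 {m n K : ℕ} (A : Matrix (Fin m) (Fin n) ℝ) (δ : ℝ)
    (hδ0 : 0 ≤ δ) (hδ : δ ≤ 1 / 2)
    (hcols : ∀ j, nsq (col A j) = 1)
    (hRIP : RIP A (K + 1) δ)
    (x : Fin n → ℝ) (S : Finset (Fin n)) (hS : vsupp x = S) (hK : S.card ≤ K)
    (S' : Finset (Fin n)) (hS' : S' ⊂ S)
    (r : Fin m → ℝ) (hr : r = projPerp A S' (A.mulVec x))
    (j : Fin n) (hj : j ∉ S) :
    |dot r (col A j)| ≤ nsq r / (2 * rnorm x (S \ S')) := by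
  subst hS hr
  have hunion : vsupp x ∪ S' = vsupp x := union_eq_left.mpr hS'.1
  have hconst : √(nsq (col A j) / (1 - δ) - 1) ≤ 1 := by
    rw [hcols, Real.sqrt_le_one, sub_le_iff_le_add, div_le_iff₀] <;> linarith
  refine (stmt6_general (by linarith) hRIP (hunion.symm ▸ hK) hS'.2
    (hunion.symm ▸ hj)).trans ?_
  exact mul_le_of_le_one_left
    (div_nonneg (nsq_nonneg _) (mul_nonneg zero_le_two (Real.sqrt_nonneg _))) hconst
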